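/- Let (X, δ) be a bounded hyperconvex diversity and let (H_i)_{i∈I} be a family of subsets of X directed by reverse inclusion such that for each i ∈ I the restriction (H_i, δ) is a hyperconvex diversity. Then the intersection Y = ⋂_{i∈I} H_i, equipped with the restricted diversity, is a hyperconvex diversity (in particular Y is nonempty). -/

import Mathlib

/-- A diversity on `X`. -/
structure Diversity (X : Type*) [DecidableEq X] where
  delta : Finset X → ℝ
  nonneg : ∀ A, 0 ≤ delta A
  eq_zero_iff : ∀ A, delta A = 0 ↔ A.card ≤ 1
  triangle : ∀ A B C : Finset X, B.Nonempty →
    delta (A ∪ C) ≤ delta (A ∪ B) + delta (B ∪ C)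

namespace Diversity

variable {X : Type*} [DecidableEq X]

/-- Hyperconvexity of a diversity. -/
def Hyperconvex (D : Diversity X) : Prop :=
  ∀ r : Finset X → ℝ, r ∅ = 0 →
    (∀ 𝒜 : Finset (Finset X), D.delta (𝒜.sup id) ≤ ∑ A ∈ 𝒜, r A) →
    ∃ z : X, ∀ Y : Finset X, D.delta (insert z Y) ≤ r Y

/-- A diversity is bounded if its values are uniformly bounded above. -/
def Bounded (D : Diversity X) : Prop :=
  ∃ M : ℝ, 0 ≤ M ∧ ∀ A : Finset X, D.delta A ≤ M

/-- The restriction of a diversity to a subset `H ⊆ X`. -/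
def restrict (D : Diversity X) (H : Set X) : Diversity H where
  delta A := D.delta (A.image Subtype.val)
  nonneg A := D.nonneg _
  eq_zero_iff A := by
    rw [D.eq_zero_iff, Finset.card_image_of_injective A Subtype.val_injective]
  triangle A B C hB := by
    have h := D.triangle (A.image Subtype.val) (B.image Subtype.val) (C.image Subtype.val)
      (hB.image _)
    simpa [Finset.image_union] using h

end Diversity

namespace Diversity

theorem aux_delta_singleton {X : Type*} [DecidableEq X] (D : Diversity X) (a : X) :
    D.delta {a} = 0 := (D.eq_zero_iff _).2 (by simp)

theorem aux_delta_empty {X : Type*} [DecidableEq X] (D : Diversity X) :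
    D.delta ∅ = 0 := (D.eq_zero_iff _).2 (by simp)

theorem aux_le_insert {X : Type*} [DecidableEq X] (D : Diversity X) (a : X) (A : Finset X) :
    D.delta A ≤ D.delta (insert a A) := by
  have h := D.triangle A {a} ∅ (by simp)
  have e : A ∪ {a} = insert a A := by ext; simp
  simpa [e, aux_delta_singleton] using h

theorem aux_insert_union {X : Type*} [DecidableEq X] (D : Diversity X) (a : X)
    (A B : Finset X) :
    D.delta (insert a (A ∪ B)) ≤ D.delta (insert a A) + D.delta (insert a B) := by
  have h := D.triangle (insert a A) {a} (insert a B) (by simp)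
  have e1 : insert a A ∪ insert a B = insert a (A ∪ B) := by ext; simp
  have e2 : insert a A ∪ {a} = insert a A := by ext; simp
  have e3 : {a} ∪ insert a B = insert a B := by ext; simp
  rwa [e1, e2, e3] at h

theorem aux_star {X : Type*} [DecidableEq X] (D : Diversity X) (a : X)
    (𝒜 : Finset (Finset X)) :
    D.delta (insert a (𝒜.sup id)) ≤ ∑ Y ∈ 𝒜, D.delta (insert a Y) := by
  classical
  induction 𝒜 using Finset.induction_on with
  | empty => simp [aux_delta_singleton]
  | insert Y 𝒜 hY ih =>
    rw [Finset.sum_insert hY, Finset.sup_insert]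
    have := aux_insert_union D a Y (𝒜.sup id)
    simp only [id, Finset.sup_eq_union] at *
    linarith

theorem aux_star' {X : Type*} [DecidableEq X] (D : Diversity X) (a : X)
    (V : Finset X) :
    D.delta (insert a V) ≤ ∑ y ∈ V, D.delta {a, y} := by
  classical
  induction V using Finset.induction_on with
  | empty => simp [aux_delta_singleton]
  | insert y V hY ih =>
    rw [Finset.sum_insert hY]
    have := aux_insert_union D a {y} V
    rw [← Finset.insert_eq] at this
    linarith

/-- Constraint form of hyperconvexity of a subset. -/
def HC {X : Type*} [DecidableEq X] (D : Diversity X) (H : Set X) : Prop :=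
  ∀ S : Finset X → ℝ → Prop,
    (∀ (𝒜 : Finset (Finset X)) (t : Finset X → ℝ),
      (∀ Y ∈ 𝒜, (Y : Set X) ⊆ H ∧ Y.Nonempty ∧ S Y (t Y)) →
      D.delta (𝒜.sup id) ≤ ∑ Y ∈ 𝒜, t Y) →
    ∃ z ∈ H, ∀ Y : Finset X, (Y : Set X) ⊆ H → Y.Nonempty → ∀ t, S Y t →
      D.delta (insert z Y) ≤ t

theorem aux_image_sup {X : Type*} [DecidableEq X] {H : Set X} (𝒜 : Finset (Finset H)) :
    (𝒜.sup id).image Subtype.val =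
      (𝒜.image (fun Y => Y.image Subtype.val)).sup (id : Finset X → Finset X) := by
  ext x
  simp only [Finset.mem_image, Finset.mem_sup, id]
  constructor
  · rintro ⟨y, ⟨Y, hY, hy⟩, rfl⟩
    exact ⟨_, ⟨Y, hY, rfl⟩, Finset.mem_image_of_mem _ hy⟩
  · rintro ⟨_, ⟨Y, hY, rfl⟩, hx⟩
    obtain ⟨y, hy, rfl⟩ := Finset.mem_image.1 hx
    exact ⟨y, ⟨Y, hY, hy⟩, rfl⟩

theorem HC.hyperconvex {X : Type*} [DecidableEq X] {D : Diversity X} {H : Set X}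
    (h : D.HC H) : (D.restrict H).Hyperconvex := by
  classical
  intro r hr0 hr
  have inj : Function.Injective (fun Y : Finset H => Y.image Subtype.val) :=
    Finset.image_injective Subtype.val_injective
  obtain ⟨z, hz, hzY⟩ := h (fun Z t => ∃ Y : Finset H, Y.image Subtype.val = Z ∧ t = r Y) (by
    intro 𝒜 t ht
    have h1 : ∀ Z ∈ 𝒜, ∃ Y : Finset H, Y.image Subtype.val = Z ∧ t Z = r Y :=
      fun Z hZ => (ht Z hZ).2.2
    choose! g hg1 hg2 using h1
    have e : (𝒜.image g).image (fun Y => Y.image Subtype.val) = 𝒜 := by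
      rw [Finset.image_image]
      conv_rhs => rw [← Finset.image_id (s := 𝒜)]
      exact Finset.image_congr fun Z hZ => hg1 Z hZ
    have h2 := hr (𝒜.image g)
    change D.delta (((𝒜.image g).sup id).image Subtype.val) ≤ _ at h2
    rw [aux_image_sup, e, Finset.sum_image] at h2
    · exact h2.trans (Finset.sum_le_sum fun Z hZ => (hg2 Z hZ).ge)
    · intro a ha b hb hab
      rw [← hg1 a ha, ← hg1 b hb, hab])
  refine ⟨⟨z, hz⟩, fun Y => ?_⟩
  change D.delta ((insert ⟨z, hz⟩ Y).image Subtype.val) ≤ _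
  rw [Finset.image_insert]
  rcases Y.eq_empty_or_nonempty with rfl | hY
  · simp [hr0, aux_delta_singleton]
  · exact hzY _ (by intro x; simp; tauto) (hY.image _) _ ⟨Y, rfl, rfl⟩

theorem Hyperconvex.hc {X : Type*} [DecidableEq X] {D : Diversity X} {H : Set X}
    (hB : D.Bounded) (h : (D.restrict H).Hyperconvex) : D.HC H := by
  classical
  obtain ⟨M, hM0, hM⟩ := hB
  intro S hS
  have inj : Function.Injective (fun Y : Finset H => Y.image Subtype.val) :=
    Finset.image_injective Subtype.val_injective
  let S' : Finset H → Set ℝ := fun Y => {t | S (Y.image Subtype.val) t ∨ t = M}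
  have sub : ∀ Y : Finset H, ((Y.image Subtype.val : Finset X) : Set X) ⊆ H := by
    intro Y x; simp; tauto
  have pos : ∀ Y : Finset H, Y.Nonempty → ∀ t ∈ S' Y, 0 ≤ t := by
    rintro Y hY t (ht | rfl)
    · have := hS {Y.image Subtype.val} (fun _ => t) (by
        intro Z hZ
        rw [Finset.mem_singleton] at hZ
        subst hZ
        exact ⟨sub Y, hY.image _, ht⟩)
      simp only [Finset.sum_singleton] at this
      exact (D.nonneg _).trans this
    · exact hM0
  -- key estimate for arbitrary selections
  have key : ∀ (𝒜 : Finset (Finset H)) (T : Finset H → ℝ),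
      (∀ Y ∈ 𝒜, Y.Nonempty ∧ T Y ∈ S' Y) →
      D.delta ((𝒜.sup id).image Subtype.val) ≤ ∑ Y ∈ 𝒜, T Y := by
    intro 𝒜 T hT
    by_cases hh : ∃ Y ∈ 𝒜, T Y = M
    · obtain ⟨Y, hY, hYM⟩ := hh
      refine (hM _).trans (hYM ▸ ?_)
      exact Finset.single_le_sum (f := T) (fun Z hZ => pos Z (hT Z hZ).1 _ (hT Z hZ).2) hY
    · push Not at hh
      have := hS (𝒜.image (fun Y => Y.image Subtype.val))
        (fun Z => T (Function.invFun (fun Y : Finset H => Y.image Subtype.val) Z)) (by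
          intro Z hZ
          obtain ⟨Y, hY, rfl⟩ := Finset.mem_image.1 hZ
          refine ⟨sub Y, (hT Y hY).1.image _, ?_⟩
          have e := Function.leftInverse_invFun inj Y
          rw [e]
          exact (hT Y hY).2.resolve_right (hh Y hY))
      rw [Finset.sum_image (fun a _ b _ hab => inj hab)] at this
      rw [aux_image_sup]
      refine this.trans (le_of_eq (Finset.sum_congr rfl fun Y _ => ?_))
      have e := Function.leftInverse_invFun inj Y
      rw [e]
  have bdd : ∀ Y : Finset H, Y.Nonempty → BddBelow (S' Y) :=
    fun Y hY => ⟨0, fun t ht => pos Y hY t ht⟩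
  obtain ⟨z, hz⟩ := h (fun Y => if Y.Nonempty then sInf (S' Y) else 0) (by simp) (by
    intro 𝒜
    change D.delta ((𝒜.sup id).image Subtype.val) ≤ _
    rw [← Finset.sum_filter]
    set ℬ := 𝒜.filter (fun Y => Y.Nonempty) with hℬ
    have e : 𝒜.sup id = ℬ.sup id := by
      ext x
      simp only [Finset.mem_sup, id, hℬ, Finset.mem_filter]
      constructor
      · rintro ⟨Y, hY, hx⟩
        exact ⟨Y, ⟨hY, ⟨x, hx⟩⟩, hx⟩
      · rintro ⟨Y, hY, hx⟩
        exact ⟨Y, hY.1, hx⟩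
    rw [e]
    refine le_of_forall_pos_le_add fun ε hε => ?_
    have hc : (0 : ℝ) < ℬ.card + 1 := by positivity
    have h1 : ∀ Y : Finset H, ∃ t ∈ S' Y, t < sInf (S' Y) + ε / (ℬ.card + 1) := fun Y =>
      exists_lt_of_csInf_lt ⟨M, Or.inr rfl⟩ (by have := div_pos hε hc; linarith)
    choose T hT1 hT2 using h1
    refine (key ℬ T fun Y hY => ⟨(Finset.mem_filter.1 hY).2, hT1 Y⟩).trans ?_
    refine (Finset.sum_le_sum fun Y _ => (hT2 Y).le).trans ?_
    rw [Finset.sum_add_distrib, Finset.sum_const, nsmul_eq_mul]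
    have : (ℬ.card : ℝ) * (ε / (ℬ.card + 1)) ≤ ε := by
      rw [← mul_div_assoc, div_le_iff₀ hc]; nlinarith
    linarith)
  refine ⟨z, z.2, fun Z hZ hne t ht => ?_⟩
  obtain ⟨Y, rfl⟩ : ∃ Y : Finset H, Y.image Subtype.val = Z := by
    refine ⟨Z.subtype (· ∈ H), ?_⟩
    ext x
    simp only [Finset.mem_image, Finset.mem_subtype]
    exact ⟨by rintro ⟨y, hy, rfl⟩; exact hy, fun hx => ⟨⟨x, hZ hx⟩, hx, rfl⟩⟩
  have hY : Y.Nonempty := by simpa using hne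
  have h3 := hz Y
  change D.delta ((insert z Y).image Subtype.val) ≤ _ at h3
  rw [Finset.image_insert, if_pos hY] at h3
  exact h3.trans (csInf_le (bdd Y hY) (Or.inl ht))

/-- `A` is an admissible subset of `H` (equal to its ball hull relative to `H`). -/
def Adm {X : Type*} [DecidableEq X] (D : Diversity X) (H A : Set X) : Prop :=
  A ⊆ H ∧ ∀ z ∈ H, (∀ Y : Finset X, (Y : Set X) ⊆ H → Y.Nonempty → ∀ t : ℝ,
    (∀ a ∈ A, D.delta (insert a Y) ≤ t) → D.delta (insert z Y) ≤ t) → z ∈ A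

theorem Adm.ball {X : Type*} [DecidableEq X] {D : Diversity X} {H A : Set X}
    (h : D.Adm H A) (S : Finset X → ℝ → Prop)
    (hS : ∀ Y t, S Y t → (Y : Set X) ⊆ H ∧ Y.Nonempty) :
    D.Adm H {z ∈ A | ∀ Y t, S Y t → D.delta (insert z Y) ≤ t} := by
  refine ⟨fun z hz => h.1 hz.1, fun z hz hz2 => ⟨h.2 z hz ?_, ?_⟩⟩
  · exact fun Y hY hne t ht => hz2 Y hY hne t fun a ha => ht a ha.1
  · exact fun Y t hYt => hz2 Y (hS Y t hYt).1 (hS Y t hYt).2 t fun a ha => ha.2 Y t hYt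

theorem aux_card {X : Type*} [DecidableEq X] {D : Diversity X} {M d : ℝ} {N : ℕ}
    (hM : ∀ A, D.delta A ≤ M) (hd : 0 < d) (hN : M ≤ N * d) {A : Set X}
    (hA : ∀ x ∈ A, ∀ y ∈ A, D.delta {x, y} ≤ d) (U : Finset X) (hU : (U : Set X) ⊆ A) :
    D.delta U ≤ U.card * (N / (N + 1) * d) := by
  rcases U.eq_empty_or_nonempty with rfl | ⟨x, hx⟩
  · simp [aux_delta_empty]
  have hN1 : (0 : ℝ) < N + 1 := by positivity
  rw [← mul_assoc, ← mul_div_assoc, div_mul_eq_mul_div, le_div_iff₀ hN1]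
  by_cases hc : U.card ≤ N + 1
  · have h1 := aux_star' D x (U.erase x)
    rw [Finset.insert_erase hx] at h1
    have h2 : ∑ y ∈ U.erase x, D.delta {x, y} ≤ (U.erase x).card • d :=
      Finset.sum_le_card_nsmul _ _ _ fun y hy => hA x (hU hx) y (hU (Finset.mem_of_mem_erase hy))
    have h3 : ((U.erase x).card : ℝ) + 1 = U.card := by
      exact_mod_cast Finset.card_erase_add_one hx
    rw [nsmul_eq_mul] at h2
    have h4 : (U.card : ℝ) ≤ N + 1 := by exact_mod_cast hc
    have h5 : D.delta U ≤ (U.card - 1) * d := by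
      rw [← h3]; simpa using h1.trans h2
    have h6 : D.delta U * (N + 1) ≤ (U.card - 1) * d * (N + 1) := by gcongr
    nlinarith
  · have h4 : (N : ℝ) + 1 ≤ U.card := by exact_mod_cast (not_le.1 hc).le
    have h5 : D.delta U ≤ N * d := (hM U).trans hN
    have h6 : D.delta U * (N + 1) ≤ N * d * (N + 1) := by gcongr
    have h7 : (N * d) * (N + 1) ≤ N * d * U.card := by gcongr
    nlinarith

theorem HC.center {X : Type*} [DecidableEq X] {D : Diversity X} {M d : ℝ} {N : ℕ}
    (hM : ∀ A, D.delta A ≤ M) (hd : 0 < d) (hN : M ≤ N * d) {H A : Set X}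
    (hH : D.HC H) (hAdm : D.Adm H A) (hne : A.Nonempty)
    (hA : ∀ x ∈ A, ∀ y ∈ A, D.delta {x, y} ≤ d) :
    ∃ z ∈ A, ∀ x ∈ A, D.delta {z, x} ≤ N / (N + 1) * d := by
  classical
  set ρ : ℝ := N / (N + 1) * d with hρ
  have hρ0 : 0 ≤ ρ := by positivity
  obtain ⟨z, hz, hzY⟩ := hH (fun Y t => (∀ a ∈ A, D.delta (insert a Y) ≤ t) ∨
      (∃ x ∈ A, Y = {x} ∧ t = ρ)) (by
    intro 𝒜 t ht
    set P := 𝒜.filter (fun Y => ∀ a ∈ A, D.delta (insert a Y) ≤ t Y) with hP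
    set Q := 𝒜.filter (fun Y => ¬ ∀ a ∈ A, D.delta (insert a Y) ≤ t Y) with hQ
    have hPQ : P ∪ Q = 𝒜 := Finset.filter_union_filter_not_eq _ _
    have hsum : ∑ Y ∈ P, t Y + ∑ Y ∈ Q, t Y = ∑ Y ∈ 𝒜, t Y :=
      Finset.sum_filter_add_sum_filter_not _ _ _
    have hQx : ∀ Y ∈ Q, ∃ x ∈ A, Y = {x} ∧ t Y = ρ := fun Y hY =>
      (ht Y (Finset.mem_filter.1 hY).1).2.2.resolve_left (Finset.mem_filter.1 hY).2
    have hPs : ∀ a ∈ A, D.delta (insert a (P.sup id)) ≤ ∑ Y ∈ P, t Y := fun a ha =>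
      (aux_star D a P).trans (Finset.sum_le_sum fun Y hY => (Finset.mem_filter.1 hY).2 a ha)
    rw [← hsum, ← hPQ, Finset.sup_union]
    rcases Q.eq_empty_or_nonempty with hQ0 | ⟨Y₀, hY₀⟩
    · obtain ⟨a, ha⟩ := hne
      rw [hQ0]
      simpa using (aux_le_insert D a _).trans (hPs a ha)
    · obtain ⟨x, hx, hY₀x, -⟩ := hQx Y₀ hY₀
      have hxQ : x ∈ Q.sup id := Finset.mem_sup.2 ⟨Y₀, hY₀, by simp [hY₀x]⟩
      have h1 := aux_insert_union D x (P.sup id) (Q.sup id)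
      rw [Finset.insert_eq_self.2 hxQ] at h1
      have h2 := aux_le_insert D x (P.sup id ∪ Q.sup id)
      have hU : ((Q.sup id : Finset X) : Set X) ⊆ A := by
        intro y hy
        obtain ⟨Y, hY, hyY⟩ := Finset.mem_sup.1 hy
        obtain ⟨w, hw, rfl, -⟩ := hQx Y hY
        simp at hyY
        exact hyY ▸ hw
      have h3 := aux_card hM hd hN hA _ hU
      have hcard : (Q.sup id).card ≤ Q.card := by
        rw [Finset.sup_eq_biUnion]
        refine (Finset.card_biUnion_le_card_mul Q id 1 fun Y hY => ?_).trans (by simp)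
        obtain ⟨w, hw, rfl, -⟩ := hQx Y hY
        simp
      have hQs : ∑ Y ∈ Q, t Y = Q.card * ρ := by
        rw [Finset.sum_congr rfl fun Y hY => (hQx Y hY).choose_spec.2.2]
        simp
      have h4 : ((Q.sup id).card : ℝ) * ρ ≤ Q.card * ρ := by
        gcongr
      have h5 := hPs x hx
      rw [Finset.sup_eq_union]
      linarith)
  refine ⟨z, hAdm.2 z hz fun Y hY hne t ht => hzY Y hY hne t (Or.inl ht), fun x hx => ?_⟩
  exact hzY {x} (by simpa using hAdm.1 hx) (by simp) ρ (Or.inr ⟨x, hx, rfl, rfl⟩)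

/-- Families used in the Zorn argument. -/
def Fam {X : Type*} [DecidableEq X] {ι : Type*} [LinearOrder ι] (D : Diversity X)
    (H : ι → Set X) : Set (ι → Set X) :=
  {A | Antitone A ∧ ∀ i, D.Adm (H i) (A i) ∧ (A i).Nonempty}

theorem HC.chain {X : Type*} [DecidableEq X] {ι : Type*} [LinearOrder ι] [Nonempty ι]
    {D : Diversity X} (hB : D.Bounded) (H : ι → Set X) (hanti : Antitone H)
    (hH : ∀ i, D.HC (H i)) : D.HC (⋂ i, H i) := by
  classical
  obtain ⟨M, hM0, hM⟩ := hB
  intro S hS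
  let S₀ : Finset X → ℝ → Prop := fun Y t => (Y : Set X) ⊆ (⋂ i, H i) ∧ Y.Nonempty ∧ S Y t
  let A₀ : ι → Set X := fun i => {z ∈ H i | ∀ Y t, S₀ Y t → D.delta (insert z Y) ≤ t}
  have hA₀ : A₀ ∈ D.Fam H := by
    refine ⟨fun i j hij z hz => ⟨hanti hij hz.1, hz.2⟩, fun i => ⟨?_, ?_⟩⟩
    · exact Adm.ball ⟨subset_rfl, fun z hz _ => hz⟩ S₀
        fun Y t h => ⟨h.1.trans (Set.iInter_subset _ _), h.2.1⟩
    · obtain ⟨z, hz, hz2⟩ := hH i S₀ fun 𝒜 t ht => hS 𝒜 t fun Y hY => (ht Y hY).2.2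
      exact ⟨z, hz, fun Y t h => hz2 Y (h.1.trans (Set.iInter_subset _ _)) h.2.1 t h⟩
  obtain ⟨A, hAA₀, hAF, hAmin⟩ : ∃ A : ι → Set X, A ≤ A₀ ∧ A ∈ D.Fam H ∧
      ∀ B ∈ D.Fam H, B ≤ A → A ≤ B := by
    obtain ⟨A, h1, h2⟩ := @zorn_le_nonempty₀ (ι → Set X)ᵒᵈ _ (D.Fam H) (by
      intro c hcF hc A₁ hA₁
      refine ⟨(fun i => ⋂ B : c, (B.1 : ι → Set X) i : ι → Set X), ?_, ?_⟩
      · refine ⟨?_, fun i => ⟨⟨?_, ?_⟩, ?_⟩⟩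
        · intro i j hij z hz
          simp only [Set.mem_iInter] at hz ⊢
          exact fun B => (hcF B.2).1 hij (hz B)
        · intro z hz
          exact ((hcF hA₁).2 i).1.1 (Set.mem_iInter.1 hz ⟨A₁, hA₁⟩)
        · intro z hz hz2
          refine Set.mem_iInter.2 fun B => ((hcF B.2).2 i).1.2 z hz fun Y hY hne t ht => ?_
          exact hz2 Y hY hne t fun a ha => ht a (Set.mem_iInter.1 ha B)
        · obtain ⟨z, hz, hz2⟩ := hH i
            (fun Y t => ∃ B ∈ c, ∀ a ∈ (B : ι → Set X) i, D.delta (insert a Y) ≤ t) (by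
              intro 𝒜 t ht
              have h1 : ∀ Y ∈ 𝒜, ∃ B ∈ c, ∀ a ∈ (B : ι → Set X) i,
                D.delta (insert a Y) ≤ t Y := fun Y hY => (ht Y hY).2.2
              have h2 : ∃ B ∈ c, ∀ Y ∈ 𝒜, ∀ a ∈ (B : ι → Set X) i,
                  D.delta (insert a Y) ≤ t Y := by
                clear ht
                induction 𝒜 using Finset.induction_on with
                | empty => exact ⟨A₁, hA₁, by simp⟩
                | insert Y 𝒜 hY ih =>
                  obtain ⟨B, hB, hB2⟩ := ih fun Y hY => h1 Y (Finset.mem_insert_of_mem hY)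
                  obtain ⟨C, hC, hC2⟩ := h1 Y (Finset.mem_insert_self _ _)
                  rcases hc.total hB hC with hBC | hBC
                  · refine ⟨C, hC, fun Z hZ a ha => ?_⟩
                    rcases Finset.mem_insert.1 hZ with rfl | hZ
                    · exact hC2 a ha
                    · exact hB2 Z hZ a (hBC i ha)
                  · refine ⟨B, hB, fun Z hZ a ha => ?_⟩
                    rcases Finset.mem_insert.1 hZ with rfl | hZ
                    · exact hC2 a (hBC i ha)
                    · exact hB2 Z hZ a ha
              obtain ⟨B, hB, hB2⟩ := h2
              obtain ⟨a, ha⟩ := ((hcF hB).2 i).2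
              exact (aux_le_insert D a _).trans ((aux_star D a 𝒜).trans
                (Finset.sum_le_sum fun Y hY => hB2 Y hY a ha)))
          refine ⟨z, Set.mem_iInter.2 fun B => ((hcF B.2).2 i).1.2 z hz
            fun Y hY hne t ht => hz2 Y hY hne t ⟨B.1, B.2, ht⟩⟩
      · intro B hB i z hz
        exact Set.mem_iInter.1 hz ⟨B, hB⟩) A₀ hA₀
    exact ⟨A, h1, h2.1, fun B hB hBA => h2.2 hB hBA⟩
  -- Step 1
  have step1 : ∀ i j, i ≤ j → ∀ Y : Finset X, (Y : Set X) ⊆ H j → Y.Nonempty → ∀ t : ℝ,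
      (∀ a ∈ A j, D.delta (insert a Y) ≤ t) → ∀ a ∈ A i, D.delta (insert a Y) ≤ t := by
    intro i j hij Y hY hne t ht a ha
    let B : ι → Set X := fun k => {z ∈ A k | ∀ Z s, (k ≤ j ∧ Z = Y ∧ s = t) →
      D.delta (insert z Z) ≤ s}
    have hBF : B ∈ D.Fam H := by
      refine ⟨fun k l hkl z hz => ⟨hAF.1 hkl hz.1, ?_⟩, fun k => ⟨?_, ?_⟩⟩
      · rintro Z s ⟨hk, rfl, rfl⟩
        rcases le_total l j with hl | hl
        · exact hz.2 _ _ ⟨hl, rfl, rfl⟩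
        · exact ht z (hAF.1 hl hz.1)
      · refine Adm.ball (hAF.2 k).1 _ ?_
        rintro Z s ⟨hk, rfl, rfl⟩
        exact ⟨hY.trans (hanti hk), hne⟩
      · rcases le_total k j with hk | hk
        · obtain ⟨z, hz⟩ := (hAF.2 j).2
          refine ⟨z, hAF.1 hk hz, ?_⟩
          rintro Z s ⟨-, rfl, rfl⟩
          exact ht z hz
        · obtain ⟨z, hz⟩ := (hAF.2 k).2
          refine ⟨z, hz, ?_⟩
          rintro Z s ⟨-, rfl, rfl⟩
          exact ht z (hAF.1 hk hz)
    exact (hAmin B hBF (fun k z hz => hz.1) i ha).2 Y t ⟨hij, rfl, rfl⟩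
  -- Step 2
  have step2 : ∀ i (d : ℝ), 0 < d → ∀ N : ℕ, M ≤ N * d →
      (∀ x ∈ A i, ∀ y ∈ A i, D.delta {x, y} ≤ d) →
      ∀ x ∈ A i, ∀ y ∈ A i, D.delta {x, y} ≤ N / (N + 1) * d := by
    intro i d hd N hN hi x hx y hy
    let B : ι → Set X := fun k => {z ∈ A k | ∀ Z s, (i ≤ k ∧ (∃ w ∈ A k, Z = {w}) ∧
      s = N / (N + 1) * d) → D.delta (insert z Z) ≤ s}
    have hBF : B ∈ D.Fam H := by
      refine ⟨fun k l hkl z hz => ⟨hAF.1 hkl hz.1, ?_⟩, fun k => ⟨?_, ?_⟩⟩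
      · rintro Z s ⟨hk, ⟨w, hw, rfl⟩, rfl⟩
        have := step1 k l hkl {z} (by simpa using (hAF.2 l).1.1 hz.1) (by simp)
          (N / (N + 1) * d) (by
            intro a ha
            rw [Finset.pair_comm]
            exact hz.2 _ _ ⟨hk.trans hkl, ⟨a, ha, rfl⟩, rfl⟩) w hw
        rwa [Finset.pair_comm] at this
      · refine Adm.ball (hAF.2 k).1 _ ?_
        rintro Z s ⟨hk, ⟨w, hw, rfl⟩, rfl⟩
        exact ⟨by simpa using (hAF.2 k).1.1 hw, by simp⟩
      · by_cases hk : i ≤ k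
        · obtain ⟨z, hz, hz2⟩ := (hH k).center hM hd hN (hAF.2 k).1 (hAF.2 k).2
            fun x hx y hy => hi x (hAF.1 hk hx) y (hAF.1 hk hy)
          refine ⟨z, hz, ?_⟩
          rintro Z s ⟨-, ⟨w, hw, rfl⟩, rfl⟩
          exact hz2 w hw
        · obtain ⟨z, hz⟩ := (hAF.2 k).2
          exact ⟨z, hz, fun Z s h => absurd h.1 hk⟩
    exact (hAmin B hBF (fun k z hz => hz.1) i hx).2 {y} _ ⟨le_rfl, ⟨y, hy, rfl⟩, rfl⟩
  -- Step 3
  have step3 : ∀ i, ∀ x ∈ A i, ∀ y ∈ A i, x = y := by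
    intro i x hx y hy
    let E : Set ℝ := {t | ∃ x ∈ A i, ∃ y ∈ A i, t = D.delta {x, y}}
    have hE : BddAbove E := ⟨M, by rintro _ ⟨x, _, y, _, rfl⟩; exact hM _⟩
    have hle : ∀ x ∈ A i, ∀ y ∈ A i, D.delta {x, y} ≤ sSup E :=
      fun x hx y hy => le_csSup hE ⟨x, hx, y, hy, rfl⟩
    have hd0 : sSup E ≤ 0 := by
      by_contra hd
      push Not at hd
      obtain ⟨N, hN⟩ := exists_nat_ge (M / sSup E)
      rw [div_le_iff₀ hd] at hN
      have h1 := step2 i _ hd N hN hle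
      have h2 : sSup E ≤ N / (N + 1) * sSup E := by
        refine csSup_le ⟨_, x, hx, y, hy, rfl⟩ ?_
        rintro _ ⟨x, hx, y, hy, rfl⟩
        exact h1 x hx y hy
      have h3 : (N : ℝ) / (N + 1) < 1 := by
        rw [div_lt_one (by positivity)]; linarith
      nlinarith
    have h0 : D.delta {x, y} = 0 := le_antisymm ((hle x hx y hy).trans hd0) (D.nonneg _)
    rw [D.eq_zero_iff, Finset.card_le_one] at h0
    exact h0 x (by simp) y (by simp)
  obtain ⟨i₀⟩ := ‹Nonempty ι›
  obtain ⟨z, hz⟩ := (hAF.2 i₀).2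
  have hzall : ∀ i, z ∈ A i := by
    intro i
    rcases le_total i i₀ with h | h
    · exact hAF.1 h hz
    · obtain ⟨w, hw⟩ := (hAF.2 i).2
      rw [step3 i₀ z hz w (hAF.1 h hw)]
      exact hw
  exact ⟨z, Set.mem_iInter.2 fun i => (hAF.2 i).1.1 (hzall i),
    fun Y hY hne t ht => (hAA₀ i₀ hz).2 Y t ⟨hY, hne, ht⟩⟩

theorem aux_select {X : Type*} {I : Type*} [Nonempty I] (H : I → Set X)
    (hdir : Directed (fun s t : Set X => t ⊆ s) H) :
    ∃ f : Finset I → I, (∀ F G, G ⊆ F → H (f F) ⊆ H (f G)) ∧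
      ∀ F, ∀ j ∈ F, H (f F) ⊆ H j := by
  classical
  haveI : IsTrans (Set X) (fun s t : Set X => t ⊆ s) := ⟨fun a b c h1 h2 => h2.trans h1⟩
  have hub : ∀ s : Finset I, ∃ z, ∀ i ∈ s, H z ⊆ H i := fun s => hdir.finset_le s
  choose u hu using hub
  let step : ∀ s : Finset I, (∀ t ⊂ s, I) → I := fun s g =>
    u (s ∪ s.ssubsets.attach.image fun t => g t.1 (Finset.mem_ssubsets.1 t.2))
  let f : Finset I → I := Finset.strongInduction step
  have hf : ∀ s, f s = u (s ∪ s.ssubsets.attach.image fun t => f t.1) := fun s =>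
    Finset.strongInduction_eq step s
  refine ⟨f, fun F G hGF => ?_, fun F j hj => ?_⟩
  · rcases hGF.eq_or_ssubset with rfl | h
    · exact subset_rfl
    · rw [hf F]
      refine hu _ _ (Finset.mem_union_right _ (Finset.mem_image.2 ?_))
      exact ⟨⟨G, Finset.mem_ssubsets.2 h⟩, Finset.mem_attach _ _, rfl⟩
  · rw [hf F]
    exact hu _ _ (Finset.mem_union_left _ hj)

open Cardinal in
theorem HC.finsets {X : Type*} [DecidableEq X] {I : Type*}
    {D : Diversity X} (hB : D.Bounded) (G : Finset I → Set X)
    (hanti : ∀ F F', F' ⊆ F → G F ⊆ G F') (hG : ∀ F, D.HC (G F)) (c : Cardinal) :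
    ∀ K : Set I, #K = c → D.HC (⋂ F : {F : Finset I // (F : Set I) ⊆ K}, G F.1) := by
  classical
  induction c using Cardinal.lt_wf.induction with
  | h c ih =>
  intro K hK
  rcases K.finite_or_infinite with hfin | hinf
  · have e : (⋂ F : {F : Finset I // (F : Set I) ⊆ K}, G F.1) = G hfin.toFinset := by
      apply subset_antisymm
      · exact Set.iInter_subset (fun F : {F : Finset I // (F : Set I) ⊆ K} => G F.1)
          ⟨hfin.toFinset, by simp⟩
      · exact Set.subset_iInter fun F => hanti _ _ fun x hx => by simpa using F.2 hx
    rw [e]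
    exact hG _
  · have hc : ℵ₀ ≤ c := by
      rw [← hK]
      haveI := hinf.to_subtype
      exact Cardinal.aleph0_le_mk K
    haveI := Cardinal.noMaxOrder hc
    obtain ⟨e⟩ : Nonempty (c.ord.ToType ≃ K) := by
      rw [← Cardinal.eq, Cardinal.mk_ord_toType, hK]
    haveI : Nonempty c.ord.ToType := by
      haveI := hinf.to_subtype
      exact ⟨e.symm (Classical.arbitrary K)⟩
    let Kx : c.ord.ToType → Set I := fun ξ => (fun η => (e η : I)) '' Set.Iio ξ
    have hKx : Monotone Kx := fun a b hab => Set.image_mono (Set.Iio_subset_Iio hab)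
    have hsub : ∀ ξ, Kx ξ ⊆ K := by
      rintro ξ _ ⟨η, -, rfl⟩
      exact (e η).2
    have key := HC.chain hB
      (fun ξ => ⋂ F : {F : Finset I // (F : Set I) ⊆ Kx ξ}, G F.1)
      (fun a b hab => Set.subset_iInter fun F => Set.iInter_subset
        (fun F : {F : Finset I // (F : Set I) ⊆ Kx b} => G F.1) ⟨F.1, F.2.trans (hKx hab)⟩)
      (fun ξ => ih (#(Kx ξ)) (Cardinal.mk_image_le.trans_lt (Cardinal.mk_Iio_toType_ord_lt ξ))
        (Kx ξ) rfl)
    convert key using 1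
    apply subset_antisymm
    · refine Set.subset_iInter fun ξ => Set.subset_iInter fun F => Set.iInter_subset
        (fun F : {F : Finset I // (F : Set I) ⊆ K} => G F.1) ⟨F.1, F.2.trans (hsub ξ)⟩
    · refine Set.subset_iInter fun F => ?_
      obtain ⟨ξ, hξ⟩ : ∃ ξ, (F.1 : Set I) ⊆ Kx ξ := by
        obtain ⟨b, hb⟩ := (F.1.attach.image fun x : {x // x ∈ F.1} => e.symm ⟨x.1, F.2 x.2⟩).exists_le
        obtain ⟨ξ, hξ⟩ := exists_gt b
        refine ⟨ξ, fun x hx => ⟨e.symm ⟨x, F.2 hx⟩, ?_, by simp⟩⟩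
        exact (hb _ (Finset.mem_image.2 ⟨⟨x, hx⟩, Finset.mem_attach _ _, rfl⟩)).trans_lt hξ
      exact (Set.iInter_subset _ ξ).trans (Set.iInter_subset
        (fun F : {F : Finset I // (F : Set I) ⊆ Kx ξ} => G F.1) ⟨F.1, hξ⟩)

end Diversity

/-- If `(X, δ)` is a bounded hyperconvex diversity and `(H i)_{i ∈ I}`
is a nonempty family of subsets of `X`, directed by reverse inclusion, such that each
restriction `(H i, δ)` is a hyperconvex diversity, then the intersection `⋂ i, H i`,
equipped with the restricted diversity, is a (nonempty) hyperconvex diversity. -/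
theorem hyperconvex_iInter_of_directed_hyperconvex_restrictions
    {X : Type*} [DecidableEq X] {I : Type*} [Nonempty I]
    (D : Diversity X) (hH : D.Hyperconvex) (hB : D.Bounded)
    (H : I → Set X)
    (hdir : Directed (fun s t : Set X => t ⊆ s) H)
    (hhyp : ∀ i : I, (D.restrict (H i)).Hyperconvex) :
    (⋂ i, H i).Nonempty ∧ (D.restrict (⋂ i, H i)).Hyperconvex := by
  obtain ⟨f, hf1, hf2⟩ := Diversity.aux_select H hdir
  have key : D.HC (⋂ i, H i) := by
    have h := Diversity.HC.finsets hB (fun F => H (f F)) hf1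
      (fun F => Diversity.Hyperconvex.hc hB (hhyp (f F))) _ Set.univ rfl
    convert h using 1
    apply subset_antisymm
    · exact Set.subset_iInter fun F => Set.iInter_subset _ _
    · refine Set.subset_iInter fun i => ?_
      exact (Set.iInter_subset (fun F : {F : Finset I // (F : Set I) ⊆ Set.univ} => H (f F.1))
        ⟨{i}, Set.subset_univ _⟩).trans (hf2 {i} i (by simp))
  refine ⟨?_, key.hyperconvex⟩
  obtain ⟨z, hz, -⟩ := key (fun _ _ => False) (by
    intro 𝒜 t ht
    have : 𝒜 = ∅ := Finset.eq_empty_of_forall_notMem fun Y hY => (ht Y hY).2.2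
    subst this
    simp [Diversity.aux_delta_empty])
  exact ⟨z, hz⟩
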